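/- arXiv:1709.00442 — 3 statements merged into one kernel-verified Lean document; each statement's English description precedes it below -/
import Mathlib

section
/- The supersymmetry operators intertwine the open XXZ Hamiltonians of adjacent lengths: for every N ≥ 2, H^(N−1) ∘ Q^(N) = Q^(N) ∘ H^(N) as maps V^⊗N → V^⊗(N−1), and H^(N) ∘ Q^(N)† = Q^(N)† ∘ H^(N−1) as maps V^⊗(N−1) → V^⊗N. -/
noncomputable section
open Complex Matrix

/-- Spin configurations of a chain of `N` sites: `true` encodes `v₊`, `false` encodes `v₋`.
The site with label `i ∈ {1,…,N}` corresponds to the index `i-1 : Fin N`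
(so the leftmost site `N` is the index `N-1`). -/
abbrev Conf (N : ℕ) := Fin N → Bool

/-- The combinatorial-point parameter `η = 2πi/3`. -/
def ηc : ℂ := 2 * (Real.pi : ℂ) * Complex.I / 3

/-- `a(u) = sinh(u+η)/sinh η`. -/
def aF (u : ℂ) : ℂ := Complex.sinh (u + ηc) / Complex.sinh ηc
/-- `b(u) = sinh(u)/sinh η`. -/
def bF (u : ℂ) : ℂ := Complex.sinh u / Complex.sinh ηc
/-- `c(u) = 1`. -/
def cF (_ : ℂ) : ℂ := 1
/-- `d(u) = sinh(u-η)/sinh η`. -/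
def dF (u : ℂ) : ℂ := Complex.sinh (u - ηc) / Complex.sinh ηc
/-- The local SUSY generator `q_{i,i+1}` (with `i = k+1`) on a chain of `n+2` sites:
it applies `q : V⊗V → V`, `q(v₊⊗v₊) = v₋` (zero on the other basis vectors), to the
adjacent sites `i, i+1` (merging them into the single site `i` of the output chain of
`n+1` sites) and the identity to all other sites. -/
def qMerge (n : ℕ) (k : Fin (n + 1)) : Matrix (Conf (n + 1)) (Conf (n + 2)) ℂ :=
  Matrix.of fun o i =>
    if i (Fin.castSucc k) = true ∧ i (Fin.succ k) = true ∧ o k = false ∧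
        (∀ j : Fin (n + 1),
          ((j : ℕ) < (k : ℕ) → o j = i (Fin.castSucc j)) ∧
          ((k : ℕ) < (j : ℕ) → o j = i (Fin.succ j)))
    then 1 else 0

/-- The SUSY operator `Q^(N)` for `N = n+2`:
`Q^(N) = ∑_{i=1}^{N-1} (-1)^{i+1} q_{i,i+1} : V^⊗N → V^⊗(N-1)`. -/
def Qop (n : ℕ) : Matrix (Conf (n + 1)) (Conf (n + 2)) ℂ :=
  ∑ k : Fin (n + 1), ((-1 : ℂ) ^ (k : ℕ)) • qMerge n k

/-- The local operator `q†_i` (with `i = k+1`) on a chain of `n+1` sites: it applies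
`q† : V → V⊗V`, `q†(v₋) = v₊⊗v₊`, `q†(v₊) = 0`, to site `i` (splitting it into the two
adjacent sites `i, i+1` of the output chain of `n+2` sites) and the identity elsewhere. -/
def qSplit (n : ℕ) (k : Fin (n + 1)) : Matrix (Conf (n + 2)) (Conf (n + 1)) ℂ :=
  Matrix.of fun o i =>
    if o (Fin.castSucc k) = true ∧ o (Fin.succ k) = true ∧ i k = false ∧
        (∀ j : Fin (n + 1),
          ((j : ℕ) < (k : ℕ) → i j = o (Fin.castSucc j)) ∧
          ((k : ℕ) < (j : ℕ) → i j = o (Fin.succ j)))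
    then 1 else 0

/-- The adjoint SUSY operator `Q^(N)†` for `N = n+2`:
`Q^(N)† = ∑_{i=1}^{N-1} (-1)^{i+1} q†_i : V^⊗(N-1) → V^⊗N`. -/
def Qdag (n : ℕ) : Matrix (Conf (n + 2)) (Conf (n + 1)) ℂ :=
  ∑ k : Fin (n + 1), ((-1 : ℂ) ^ (k : ℕ)) • qSplit n k
/-- Pauli matrix `σˣ` in the basis `(v₊, v₋)`. -/
def sigmaX : Matrix Bool Bool ℂ := Matrix.of fun o i => if o ≠ i then 1 else 0
/-- Pauli matrix `σʸ` in the basis `(v₊, v₋)`. -/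
def sigmaY : Matrix Bool Bool ℂ :=
  Matrix.of fun o i =>
    if o = true ∧ i = false then -Complex.I else if o = false ∧ i = true then Complex.I else 0
/-- Pauli matrix `σᶻ` in the basis `(v₊, v₋)`. -/
def sigmaZ : Matrix Bool Bool ℂ :=
  Matrix.of fun o i => if o = i then (if o then 1 else -1) else 0

/-- A one-site operator `M` acting at site index `j` of a chain of `N` sites
(identity elsewhere). -/
def pauliAt (N : ℕ) (j : Fin N) (M : Matrix Bool Bool ℂ) :
    Matrix (Conf N) (Conf N) ℂ :=
  Matrix.of fun o i => (if ∀ l, l ≠ j → o l = i l then 1 else 0) * M (o j) (i j)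

/-- The open XXZ Hamiltonian `H^(N)` for `N = n+1`:
`H^(N) = -(1/2) ∑_{i=1}^{N-1} (σˣᵢσˣᵢ₊₁ + σʸᵢσʸᵢ₊₁ - (1/2)σᶻᵢσᶻᵢ₊₁)
  - (1/4)(σᶻ₁ + σᶻ_N) + ((3N-1)/4)·I`. -/
def Hop (n : ℕ) : Matrix (Conf (n + 1)) (Conf (n + 1)) ℂ :=
  (-(1 / 2 : ℂ)) • (∑ k : Fin n,
      (pauliAt (n + 1) (Fin.castSucc k) sigmaX * pauliAt (n + 1) (Fin.succ k) sigmaX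
        + pauliAt (n + 1) (Fin.castSucc k) sigmaY * pauliAt (n + 1) (Fin.succ k) sigmaY
        - (1 / 2 : ℂ) • (pauliAt (n + 1) (Fin.castSucc k) sigmaZ
            * pauliAt (n + 1) (Fin.succ k) sigmaZ)))
    - (1 / 4 : ℂ) • (pauliAt (n + 1) 0 sigmaZ + pauliAt (n + 1) (Fin.last n) sigmaZ)
    + ((3 * ((n : ℂ) + 1) - 1) / 4) • (1 : Matrix (Conf (n + 1)) (Conf (n + 1)) ℂ)

/-!
Put `Q^(1) = 0`. Then `H^(N) = Q^(N+1) Q^(N+1)† + Q^(N)† Q^(N)` and `Q^(N) Q^(N+1) = 0`, and the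
intertwining relations are those of any Laplacian of a chain complex. Both facts follow by induction
on the length from splitting off the first site: writing `q₁` for the merging of the first two
sites, `Q^(N+1) = q₁ - 1 ⊗ Q^(N)`, and both sides of the formula for `H^(N+1)` exceed `1 ⊗ H^(N)`
by the same operator on the first two sites.
-/

lemma laplacian_intertwines_differential {R κ₀ κ₁ κ₂ κ₃ : Type*} [NonUnitalSemiring R] [Fintype κ₀]
    [Fintype κ₁] [Fintype κ₂] [Fintype κ₃] {d₀ : Matrix κ₀ κ₁ R} {d₁ : Matrix κ₁ κ₂ R}
    {d₂ : Matrix κ₂ κ₃ R} (e₀ : Matrix κ₁ κ₀ R) (e₁ : Matrix κ₂ κ₁ R) (e₂ : Matrix κ₃ κ₂ R)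
    (h₀₁ : d₀ * d₁ = 0) (h₁₂ : d₁ * d₂ = 0) :
    (d₁ * e₁ + e₀ * d₀) * d₁ = d₁ * (d₂ * e₂ + e₁ * d₁) := by
  rw [Matrix.add_mul, Matrix.mul_add, Matrix.mul_assoc e₀, h₀₁, ← Matrix.mul_assoc d₁ d₂, h₁₂,
    Matrix.mul_zero, Matrix.zero_mul, add_zero, zero_add, Matrix.mul_assoc]

section FirstSite

lemma matrix_ext_cons {σ R : Type*} {m n : ℕ}
    {A B : Matrix (Fin (m + 1) → σ) (Fin (n + 1) → σ) R}
    (h : ∀ a o b i, A (Fin.cons a o) (Fin.cons b i) = B (Fin.cons a o) (Fin.cons b i)) :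
    A = B := by
  ext o i
  simpa only [Fin.cons_self_tail] using h (o 0) (Fin.tail o) (i 0) (Fin.tail i)

variable {σ R : Type*} [DecidableEq σ] [Semiring R] {l m n : ℕ}

variable (R) in
/-- The operator `v ↦ a ⊗ v` adjoining a site in the basis state `a` at the front of a chain of
length `N`. Its transpose projects onto that state of the first site and removes the site. -/
def consMatrix (a : σ) (N : ℕ) : Matrix (Fin (N + 1) → σ) (Fin N → σ) R :=
  Matrix.of fun o i => if o = Fin.cons a i then 1 else 0

/-- The operator `1 ⊗ A` acting by `A` on all sites but the first, as a linear function of `A`. -/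
def idTensor : Matrix (Fin m → σ) (Fin n → σ) R →ₗ[R]
    Matrix (Fin (m + 1) → σ) (Fin (n + 1) → σ) R where
  toFun A := Matrix.of fun o i => if o 0 = i 0 then A (Fin.tail o) (Fin.tail i) else 0
  map_add' A B := by ext o i; by_cases h : o 0 = i 0 <;> simp [h]
  map_smul' c A := by ext; simp

lemma consMatrix_cons_apply (a b : σ) (o i : Fin n → σ) :
    consMatrix R a n (Fin.cons b o) i = if b = a ∧ o = i then 1 else 0 := by
  simp only [consMatrix, of_apply, Fin.cons_inj]

lemma idTensor_cons_apply_cons (A : Matrix (Fin m → σ) (Fin n → σ) R) (a b : σ)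
    (o : Fin m → σ) (i : Fin n → σ) :
    idTensor A (Fin.cons a o) (Fin.cons b i) = if a = b then A o i else 0 :=
  rfl

lemma transpose_idTensor (A : Matrix (Fin m → σ) (Fin n → σ) R) :
    (idTensor A)ᵀ = idTensor Aᵀ :=
  matrix_ext_cons fun a o b i => by simp [idTensor_cons_apply_cons, eq_comm]

lemma idTensor_one : idTensor (1 : Matrix (Fin n → σ) (Fin n → σ) R) = 1 :=
  matrix_ext_cons fun a o b i => by
    simp [idTensor_cons_apply_cons, Matrix.one_apply, Fin.cons_inj, ite_and]

variable [Fintype σ]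

lemma mul_consMatrix_apply {κ : Type*} (A : Matrix κ (Fin (n + 1) → σ) R) (a : σ) (k : κ)
    (i : Fin n → σ) : (A * consMatrix R a n) k i = A k (Fin.cons a i) := by
  simp [Matrix.mul_apply, consMatrix]

lemma consMatrix_mul_cons_apply {κ : Type*} (a b : σ) (A : Matrix (Fin n → σ) κ R)
    (o : Fin n → σ) (k : κ) :
    (consMatrix R a n * A) (Fin.cons b o) k = if b = a then A o k else 0 := by
  simp [Matrix.mul_apply, consMatrix_cons_apply, ite_and]

lemma matrix_ext_mul_consMatrix {κ : Type*} {A B : Matrix κ (Fin (n + 1) → σ) R}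
    (h : ∀ a : σ, A * consMatrix R a n = B * consMatrix R a n) : A = B := by
  ext k i
  simpa only [mul_consMatrix_apply, Fin.cons_self_tail] using
    congrFun₂ (h (i 0)) k (Fin.tail i)

lemma transpose_consMatrix_mul_consMatrix (a b : σ) (N : ℕ) :
    (consMatrix R a N)ᵀ * consMatrix R b N = if a = b then 1 else 0 := by
  ext o i
  rw [mul_consMatrix_apply, transpose_apply, consMatrix_cons_apply]
  split_ifs <;> simp_all [Matrix.one_apply, eq_comm]

lemma transpose_consMatrix_mul_self (a : σ) (N : ℕ) :
    (consMatrix R a N)ᵀ * consMatrix R a N = 1 := by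
  rw [transpose_consMatrix_mul_consMatrix, if_pos rfl]

lemma transpose_consMatrix_mul_of_ne {a b : σ} (h : a ≠ b) (N : ℕ) :
    (consMatrix R a N)ᵀ * consMatrix R b N = 0 := by
  rw [transpose_consMatrix_mul_consMatrix, if_neg h]

lemma sum_consMatrix_mul_transpose (N : ℕ) :
    ∑ a : σ, consMatrix R a N * (consMatrix R a N)ᵀ = 1 := by
  refine matrix_ext_mul_consMatrix fun b => ?_
  simp_rw [Matrix.sum_mul, Matrix.mul_assoc]
  rw [Fintype.sum_eq_single b fun a hab => by
    rw [transpose_consMatrix_mul_of_ne hab, Matrix.mul_zero]]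
  rw [transpose_consMatrix_mul_self, Matrix.mul_one, Matrix.one_mul]

lemma idTensor_mul_consMatrix (A : Matrix (Fin m → σ) (Fin n → σ) R) (a : σ) :
    idTensor A * consMatrix R a n = consMatrix R a m * A := by
  ext o i
  rw [← Fin.cons_self_tail o, mul_consMatrix_apply, consMatrix_mul_cons_apply,
    idTensor_cons_apply_cons]

lemma transpose_consMatrix_mul_idTensor (A : Matrix (Fin m → σ) (Fin n → σ) R) (a : σ) :
    (consMatrix R a m)ᵀ * idTensor A = A * (consMatrix R a n)ᵀ := by
  refine matrix_ext_mul_consMatrix fun b => ?_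
  rw [Matrix.mul_assoc, idTensor_mul_consMatrix, ← Matrix.mul_assoc, Matrix.mul_assoc A,
    transpose_consMatrix_mul_consMatrix, transpose_consMatrix_mul_consMatrix]
  split_ifs <;> simp

lemma idTensor_eq_sum (A : Matrix (Fin m → σ) (Fin n → σ) R) :
    idTensor A = ∑ a : σ, consMatrix R a m * A * (consMatrix R a n)ᵀ := by
  rw [← Matrix.one_mul (idTensor A), ← sum_consMatrix_mul_transpose, Matrix.sum_mul]
  simp only [Matrix.mul_assoc, transpose_consMatrix_mul_idTensor]

lemma idTensor_mul (A : Matrix (Fin l → σ) (Fin m → σ) R) (B : Matrix (Fin m → σ) (Fin n → σ) R) :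
    idTensor (A * B) = idTensor A * idTensor B :=
  matrix_ext_mul_consMatrix fun a => by
    rw [idTensor_mul_consMatrix, Matrix.mul_assoc (idTensor A), idTensor_mul_consMatrix,
      ← Matrix.mul_assoc (idTensor A), idTensor_mul_consMatrix, Matrix.mul_assoc]

end FirstSite

local notation "ι₊" => consMatrix ℂ true
local notation "ι₋" => consMatrix ℂ false

section Supercharge

lemma qMerge_succ (n : ℕ) (k : Fin (n + 1)) : qMerge (n + 1) k.succ = idTensor (qMerge n k) :=
  matrix_ext_cons fun a o b i => by
    by_cases h : a = b <;>
      simp [qMerge, idTensor_cons_apply_cons, Fin.forall_fin_succ (n := n + 1), h]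

lemma qMerge_zero (n : ℕ) : qMerge n 0 = ι₋ n * ((ι₊ n)ᵀ * (ι₊ (n + 1))ᵀ) := by
  refine matrix_ext_cons fun a o b i => ?_
  obtain ⟨c, i, rfl⟩ : ∃ c j, i = Fin.cons c j := ⟨i 0, Fin.tail i, (Fin.cons_self_tail i).symm⟩
  rw [consMatrix_mul_cons_apply, ← transpose_mul, transpose_apply, consMatrix_mul_cons_apply,
    consMatrix_cons_apply]
  cases a <;> cases b <;> cases c <;>
    simp [qMerge, Fin.forall_fin_succ (n := n), funext_iff, eq_comm (a := i)]

/-- The supercharge `Q^(N+1)` from `N + 1` sites to `N` sites, with the convention `Q^(1) = 0`. -/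
def supercharge : (N : ℕ) → Matrix (Conf N) (Conf (N + 1)) ℂ
  | 0 => 0
  | n + 1 => Qop n

lemma supercharge_succ (N : ℕ) :
    supercharge (N + 1) = qMerge N 0 - idTensor (supercharge N) := by
  cases N with
  | zero => simp [supercharge, Qop]
  | succ n =>
    simp only [supercharge, Qop, Fin.sum_univ_succ (n := n + 1), Fin.val_zero, pow_zero, one_smul,
      Fin.val_succ, pow_succ, mul_neg_one, neg_smul, Finset.sum_neg_distrib, qMerge_succ, map_sum,
      map_smul, sub_eq_add_neg]

lemma Qdag_eq_transpose (n : ℕ) : Qdag n = (Qop n)ᵀ := by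
  simp only [Qdag, Qop, transpose_sum, transpose_smul]
  rfl

lemma transpose_plus_mul_supercharge_succ (N : ℕ) :
    (ι₊ N)ᵀ * supercharge (N + 1) = -(supercharge N * (ι₊ (N + 1))ᵀ) := by
  rw [supercharge_succ, Matrix.mul_sub, qMerge_zero, ← Matrix.mul_assoc,
    transpose_consMatrix_mul_of_ne (by decide), Matrix.zero_mul, zero_sub,
    transpose_consMatrix_mul_idTensor]

lemma supercharge_succ_mul_plus (N : ℕ) :
    supercharge (N + 1) * ι₊ (N + 1) = ι₋ N * (ι₊ N)ᵀ - ι₊ N * supercharge N := by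
  rw [supercharge_succ, Matrix.sub_mul, qMerge_zero, idTensor_mul_consMatrix, Matrix.mul_assoc,
    Matrix.mul_assoc, transpose_consMatrix_mul_self, Matrix.mul_one]

lemma qMerge_zero_mul_qMerge_zero (N : ℕ) : qMerge N 0 * qMerge (N + 1) 0 = 0 := by
  rw [qMerge_zero, qMerge_zero, Matrix.mul_assoc, Matrix.mul_assoc,
    ← Matrix.mul_assoc _ (ι₋ (N + 1)), transpose_consMatrix_mul_of_ne (by decide), Matrix.zero_mul,
    Matrix.mul_zero, Matrix.mul_zero]

lemma qMerge_zero_mul_idTensor_supercharge (N : ℕ) :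
    qMerge N 0 * idTensor (supercharge (N + 1)) =
      -(idTensor (supercharge N) * qMerge (N + 1) 0) :=
  calc
    _ = ι₋ N * ((ι₊ N)ᵀ * supercharge (N + 1) * (ι₊ (N + 2))ᵀ) := by
      rw [qMerge_zero, Matrix.mul_assoc, Matrix.mul_assoc, transpose_consMatrix_mul_idTensor,
        ← Matrix.mul_assoc (ι₊ N)ᵀ]
    _ = -(ι₋ N * supercharge N * ((ι₊ (N + 1))ᵀ * (ι₊ (N + 2))ᵀ)) := by
      rw [transpose_plus_mul_supercharge_succ, Matrix.neg_mul, Matrix.mul_neg, Matrix.mul_assoc,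
        Matrix.mul_assoc]
    _ = _ := by
      rw [qMerge_zero, ← Matrix.mul_assoc (idTensor _), idTensor_mul_consMatrix]

lemma supercharge_mul_supercharge_succ (N : ℕ) : supercharge N * supercharge (N + 1) = 0 := by
  induction N with
  | zero => exact Matrix.zero_mul _
  | succ N ih =>
    rw [supercharge_succ N, supercharge_succ (N + 1), Matrix.sub_mul, Matrix.mul_sub,
      Matrix.mul_sub, qMerge_zero_mul_qMerge_zero, qMerge_zero_mul_idTensor_supercharge,
      ← idTensor_mul, ih, map_zero]
    abel

end Supercharge

section Laplacian

/-- The Hamiltonian density on the first two sites, `|-⟩⟨-| ⊗ 1 + |++⟩⟨++| - |-+⟩⟨+-| - |+-⟩⟨-+|`: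
the difference between the Hamiltonian of length `n + 2` and `1 ⊗` that of length `n + 1`. -/
def firstBond (n : ℕ) : Matrix (Conf (n + 2)) (Conf (n + 2)) ℂ :=
  ι₋ (n + 1) * (ι₋ (n + 1))ᵀ + ι₊ (n + 1) * (ι₊ n * (ι₊ n)ᵀ) * (ι₊ (n + 1))ᵀ
    - ι₋ (n + 1) * (ι₊ n * (ι₋ n)ᵀ) * (ι₊ (n + 1))ᵀ
    - ι₊ (n + 1) * (ι₋ n * (ι₊ n)ᵀ) * (ι₋ (n + 1))ᵀ

/-- The supersymmetric Hamiltonian `Q Q† + Q† Q` on `N + 1` sites. -/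
def superLaplacian (N : ℕ) : Matrix (Conf (N + 1)) (Conf (N + 1)) ℂ :=
  supercharge (N + 1) * (supercharge (N + 1))ᵀ + (supercharge N)ᵀ * supercharge N

lemma transpose_superLaplacian (N : ℕ) : (superLaplacian N)ᵀ = superLaplacian N := by
  simp only [superLaplacian, transpose_add, transpose_mul, transpose_transpose]

lemma qMerge_zero_mul_transpose (N : ℕ) :
    qMerge N 0 * (qMerge N 0)ᵀ = ι₋ N * (ι₋ N)ᵀ := by
  simp only [qMerge_zero, transpose_mul, transpose_transpose, Matrix.mul_assoc]
  rw [← Matrix.mul_assoc _ (ι₊ (N + 1)), transpose_consMatrix_mul_self, Matrix.one_mul,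
    ← Matrix.mul_assoc _ (ι₊ N), transpose_consMatrix_mul_self, Matrix.one_mul]

lemma transpose_qMerge_zero_mul_self (N : ℕ) :
    (qMerge N 0)ᵀ * qMerge N 0 = ι₊ (N + 1) * (ι₊ N * (ι₊ N)ᵀ) * (ι₊ (N + 1))ᵀ := by
  simp only [qMerge_zero, transpose_mul, transpose_transpose, Matrix.mul_assoc]
  rw [← Matrix.mul_assoc _ (ι₋ N), transpose_consMatrix_mul_self, Matrix.one_mul]

lemma idTensor_supercharge_mul_transpose_qMerge_zero (N : ℕ) :
    idTensor (supercharge (N + 1)) * (qMerge (N + 1) 0)ᵀ =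
      ι₊ (N + 1) * (ι₋ N * (ι₊ N)ᵀ) * (ι₋ (N + 1))ᵀ
        - (qMerge N 0)ᵀ * idTensor (supercharge N) := by
  simp only [qMerge_zero, transpose_mul, transpose_transpose, Matrix.mul_assoc,
    transpose_consMatrix_mul_idTensor]
  rw [← Matrix.mul_assoc (idTensor _), idTensor_mul_consMatrix, Matrix.mul_assoc,
    ← Matrix.mul_assoc (supercharge _), supercharge_succ_mul_plus]
  simp only [Matrix.sub_mul, Matrix.mul_sub, Matrix.mul_assoc]

lemma idTensor_superLaplacian (N : ℕ) :
    idTensor (superLaplacian N) =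
      idTensor (supercharge (N + 1)) * (idTensor (supercharge (N + 1)))ᵀ
        + (idTensor (supercharge N))ᵀ * idTensor (supercharge N) := by
  rw [superLaplacian, map_add, idTensor_mul, idTensor_mul, transpose_idTensor, transpose_idTensor]

lemma superLaplacian_succ (N : ℕ) :
    superLaplacian (N + 1) = idTensor (superLaplacian N) + firstBond N := by
  have cross := idTensor_supercharge_mul_transpose_qMerge_zero N
  have cross_transpose := congrArg transpose cross
  simp only [transpose_sub, transpose_mul, transpose_transpose] at cross_transpose
  rw [superLaplacian, supercharge_succ N, supercharge_succ (N + 1), idTensor_superLaplacian]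
  simp only [transpose_sub, Matrix.sub_mul, Matrix.mul_sub]
  rw [cross, cross_transpose, qMerge_zero_mul_transpose, transpose_qMerge_zero_mul_self,
    firstBond]
  simp only [Matrix.mul_assoc]
  abel

lemma superLaplacian_zero : superLaplacian 0 = ι₋ 0 * (ι₋ 0)ᵀ := by
  rw [superLaplacian, supercharge_succ, supercharge, map_zero, sub_zero, Matrix.mul_zero, add_zero,
    qMerge_zero_mul_transpose]

end Laplacian

section Hamiltonian

lemma pauliAt_succ (N : ℕ) (j : Fin N) (M : Matrix Bool Bool ℂ) :
    pauliAt (N + 1) j.succ M = idTensor (pauliAt N j M) :=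
  matrix_ext_cons fun a o b i => by
    by_cases h : a = b <;>
      simp [pauliAt, idTensor_cons_apply_cons, Fin.forall_fin_succ (n := N), h,
        (Fin.succ_ne_zero j).symm]

lemma pauliAt_zero (N : ℕ) (M : Matrix Bool Bool ℂ) :
    pauliAt (N + 1) 0 M =
      ∑ a : Bool, ∑ b : Bool, M a b • (consMatrix ℂ a N * (consMatrix ℂ b N)ᵀ) := by
  refine matrix_ext_cons fun a o b i => ?_
  cases a <;> cases b <;>
    simp [pauliAt, Fin.forall_fin_succ (n := N), funext_iff, consMatrix_mul_cons_apply,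
      consMatrix_cons_apply, eq_comm (a := i)]

lemma one_eq_plus_add_minus (N : ℕ) :
    (1 : Matrix (Conf (N + 1)) (Conf (N + 1)) ℂ) = ι₊ N * (ι₊ N)ᵀ + ι₋ N * (ι₋ N)ᵀ := by
  rw [← sum_consMatrix_mul_transpose, Fintype.sum_bool]

lemma pauliAt_zero_sigmaX (N : ℕ) :
    pauliAt (N + 1) 0 sigmaX = ι₊ N * (ι₋ N)ᵀ + ι₋ N * (ι₊ N)ᵀ := by
  simp [pauliAt_zero, sigmaX]

lemma pauliAt_zero_sigmaY (N : ℕ) :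
    pauliAt (N + 1) 0 sigmaY = I • (ι₋ N * (ι₊ N)ᵀ - ι₊ N * (ι₋ N)ᵀ) := by
  simp [pauliAt_zero, sigmaY, smul_sub, neg_add_eq_sub]

lemma pauliAt_zero_sigmaZ (N : ℕ) :
    pauliAt (N + 1) 0 sigmaZ = ι₊ N * (ι₊ N)ᵀ - ι₋ N * (ι₋ N)ᵀ := by
  simp [pauliAt_zero, sigmaZ, sub_eq_add_neg]

lemma sigmaX_mul_sigmaX_add_sigmaY_mul_sigmaY (n : ℕ) :
    pauliAt (n + 2) 0 sigmaX * pauliAt (n + 2) 1 sigmaX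
        + pauliAt (n + 2) 0 sigmaY * pauliAt (n + 2) 1 sigmaY =
      (2 : ℂ) • (ι₋ (n + 1) * (ι₊ n * (ι₋ n)ᵀ) * (ι₊ (n + 1))ᵀ
        + ι₊ (n + 1) * (ι₋ n * (ι₊ n)ᵀ) * (ι₋ (n + 1))ᵀ) := by
  rw [← Fin.succ_zero_eq_one, pauliAt_succ, pauliAt_succ]
  simp only [pauliAt_zero_sigmaX, pauliAt_zero_sigmaY, Matrix.add_mul, Matrix.sub_mul,
    Matrix.smul_mul, Matrix.mul_assoc, transpose_consMatrix_mul_idTensor, Matrix.mul_add,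
    Matrix.mul_sub, Matrix.mul_smul, smul_sub, smul_smul, I_mul_I]
  module

lemma sigmaZ_mul_sigmaZ (n : ℕ) :
    pauliAt (n + 2) 0 sigmaZ * pauliAt (n + 2) 1 sigmaZ =
      ι₊ (n + 1) * (ι₊ n * (ι₊ n)ᵀ) * (ι₊ (n + 1))ᵀ
        - ι₊ (n + 1) * (ι₋ n * (ι₋ n)ᵀ) * (ι₊ (n + 1))ᵀ
        - ι₋ (n + 1) * (ι₊ n * (ι₊ n)ᵀ) * (ι₋ (n + 1))ᵀ
        + ι₋ (n + 1) * (ι₋ n * (ι₋ n)ᵀ) * (ι₋ (n + 1))ᵀ := by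
  rw [← Fin.succ_zero_eq_one, pauliAt_succ]
  simp only [pauliAt_zero_sigmaZ, Matrix.sub_mul, Matrix.mul_assoc,
    transpose_consMatrix_mul_idTensor, Matrix.mul_sub]
  abel

lemma Hop_zero : Hop 0 = ι₋ 0 * (ι₋ 0)ᵀ := by
  rw [Hop, Fin.last_zero, pauliAt_zero_sigmaZ, one_eq_plus_add_minus, Finset.univ_eq_empty,
    Finset.sum_empty]
  push_cast
  module

lemma firstBond_eq (n : ℕ) :
    firstBond n = (-(1 / 2 : ℂ)) • (pauliAt (n + 2) 0 sigmaX * pauliAt (n + 2) 1 sigmaX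
        + pauliAt (n + 2) 0 sigmaY * pauliAt (n + 2) 1 sigmaY
        - (1 / 2 : ℂ) • (pauliAt (n + 2) 0 sigmaZ * pauliAt (n + 2) 1 sigmaZ))
      - (1 / 4 : ℂ) • (pauliAt (n + 2) 0 sigmaZ - pauliAt (n + 2) 1 sigmaZ)
      + (3 / 4 : ℂ) • 1 := by
  have split_second (a : Bool) : consMatrix ℂ a (n + 1) * (consMatrix ℂ a (n + 1))ᵀ =
      consMatrix ℂ a (n + 1) * (ι₊ n * (ι₊ n)ᵀ) * (consMatrix ℂ a (n + 1))ᵀ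
        + consMatrix ℂ a (n + 1) * (ι₋ n * (ι₋ n)ᵀ) * (consMatrix ℂ a (n + 1))ᵀ := by
    rw [← Matrix.add_mul, ← Matrix.mul_add, ← one_eq_plus_add_minus, Matrix.mul_one]
  rw [firstBond, sigmaX_mul_sigmaX_add_sigmaY_mul_sigmaY, sigmaZ_mul_sigmaZ, ← Fin.succ_zero_eq_one,
    pauliAt_succ, idTensor_eq_sum, Fintype.sum_bool, pauliAt_zero_sigmaZ, pauliAt_zero_sigmaZ,
    one_eq_plus_add_minus (n + 1)]
  simp only [split_second, Matrix.mul_sub, Matrix.sub_mul]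
  module

lemma Hop_succ (n : ℕ) : Hop (n + 1) = idTensor (Hop n) + firstBond n := by
  have pauliAt_last (M) : pauliAt (n + 2) (Fin.last (n + 1)) M =
      idTensor (pauliAt (n + 1) (Fin.last n) M) := by
    rw [← Fin.succ_last, pauliAt_succ]
  have pauliAt_castSucc (k : Fin n) (M) : pauliAt (n + 2) k.succ.castSucc M =
      idTensor (pauliAt (n + 1) k.castSucc M) := by
    rw [← Fin.succ_castSucc, pauliAt_succ]
  have idTensor_pauliAt_zero (M) : idTensor (pauliAt (n + 1) 0 M) = pauliAt (n + 2) 1 M := by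
    rw [← pauliAt_succ, Fin.succ_zero_eq_one]
  rw [firstBond_eq, Hop, Hop, Fin.sum_univ_succ, Fin.castSucc_zero, Fin.succ_zero_eq_one,
    pauliAt_last]
  simp only [pauliAt_castSucc, pauliAt_succ, ← idTensor_mul, map_add, map_sub, map_smul, map_sum,
    idTensor_pauliAt_zero, idTensor_one]
  push_cast
  module

lemma Hop_eq_superLaplacian (n : ℕ) : Hop n = superLaplacian n := by
  induction n with
  | zero => rw [Hop_zero, superLaplacian_zero]
  | succ n ih => rw [Hop_succ, superLaplacian_succ, ih]

end Hamiltonian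

/-- the SUSY operators intertwine the Hamiltonians of adjacent lengths,
`H^(N-1) ∘ Q^(N) = Q^(N) ∘ H^(N)` and `H^(N) ∘ Q^(N)† = Q^(N)† ∘ H^(N-1)` for every
`N = n+2 ≥ 2` (`Hop n = H^(n+1)`, `Qop n = Q^(n+2)`, `Qdag n = Q^(n+2)†`). -/
theorem SUSY_intertwines_H (n : ℕ) :
    Hop n * Qop n = Qop n * Hop (n + 1) ∧ Hop (n + 1) * Qdag n = Qdag n * Hop n := by
  have intertwines : superLaplacian n * Qop n = Qop n * superLaplacian (n + 1) :=
    laplacian_intertwines_differential _ _ _ (supercharge_mul_supercharge_succ n)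
      (supercharge_mul_supercharge_succ (n + 1))
  rw [Hop_eq_superLaplacian, Hop_eq_superLaplacian, Qdag_eq_transpose]
  refine ⟨intertwines, ?_⟩
  simpa only [transpose_mul, transpose_superLaplacian] using (congrArg transpose intertwines).symm
end
end

section
/- (Theorem 1, ℬ-relation) For every N ≥ 2 and every u ∈ ℂ: Q^(N) ∘ ℬ^(N)(u) = d(u)² · ℬ^(N−1)(u) ∘ Q^(N) as linear maps V^⊗N → V^⊗(N−1). -/
noncomputable section
open Complex Matrix

/-- The R-matrix `R(u)` on `V⊗V` in the ordered basis `(v₊⊗v₊, v₊⊗v₋, v₋⊗v₊, v₋⊗v₋)`: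
`[[a,0,0,0],[0,b,c,0],[0,c,b,0],[0,0,0,a]]`. -/
def Rm (u : ℂ) : Matrix (Bool × Bool) (Bool × Bool) ℂ :=
  Matrix.of fun o i =>
    if o = i then (if o.1 = o.2 then aF u else bF u)
    else if o.1 = i.2 ∧ o.2 = i.1 ∧ o.1 ≠ o.2 then cF u
    else 0

/-- The boundary K-matrix `K⁻(u) = diag(d(u), -a(u))` in the basis `(v₊, v₋)`. -/
def Km (u : ℂ) : Matrix Bool Bool ℂ :=
  Matrix.of fun o i => if o = i then (if o then dF u else -aF u) else 0

/-- `R₀ᵢ(u)`: the matrix `R(u)` applied to `V₀ ⊗ Vᵢ` (auxiliary space first), identity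
elsewhere, on `V₀ ⊗ V^⊗N`; here the site with label `i` is the index `i-1`. -/
def R0i (N : ℕ) (u : ℂ) (i : Fin N) :
    Matrix (Bool × Conf N) (Bool × Conf N) ℂ :=
  Matrix.of fun x y =>
    if ∀ j, j ≠ i → x.2 j = y.2 j then Rm u (x.1, x.2 i) (y.1, y.2 i) else 0

/-- `Rᵢ₀(u)`: the matrix `R(u)` applied to `Vᵢ ⊗ V₀` (auxiliary space second), identity
elsewhere, on `V₀ ⊗ V^⊗N`. -/
def Ri0 (N : ℕ) (u : ℂ) (i : Fin N) :
    Matrix (Bool × Conf N) (Bool × Conf N) ℂ :=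
  Matrix.of fun x y =>
    if ∀ j, j ≠ i → x.2 j = y.2 j then Rm u (x.2 i, x.1) (y.2 i, y.1) else 0

/-- `T^(N)(u) = R₀₁(u) R₀₂(u) ⋯ R₀N(u)`. -/
def Tmono (N : ℕ) (u : ℂ) : Matrix (Bool × Conf N) (Bool × Conf N) ℂ :=
  (List.ofFn fun i : Fin N => R0i N u i).prod

/-- `T̄^(N)(u) = R_{N0}(u) ⋯ R_{20}(u) R_{10}(u)`. -/
def Tbar (N : ℕ) (u : ℂ) : Matrix (Bool × Conf N) (Bool × Conf N) ℂ :=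
  (List.ofFn fun i : Fin N => Ri0 N u i).reverse.prod

/-- `K₀⁻(u)`: the matrix `K⁻(u)` acting on the auxiliary space `V₀`, identity on `V^⊗N`. -/
def K0m (N : ℕ) (u : ℂ) : Matrix (Bool × Conf N) (Bool × Conf N) ℂ :=
  Matrix.of fun x y => if x.2 = y.2 then Km u x.1 y.1 else 0

/-- The double-row monodromy matrix `U^(N)(u) = T̄^(N)(u) K₀⁻(u) T^(N)(u)`. -/
def Umono (N : ℕ) (u : ℂ) : Matrix (Bool × Conf N) (Bool × Conf N) ℂ :=
  Tbar N u * K0m N u * Tmono N u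

/-- `𝒜^(N)(u)`: the `(v₊, v₊)` auxiliary-space block of `U^(N)(u)`. -/
def Aop (N : ℕ) (u : ℂ) : Matrix (Conf N) (Conf N) ℂ :=
  Matrix.of fun s t => Umono N u (true, s) (true, t)
/-- `ℬ^(N)(u)`: the `(v₊, v₋)` auxiliary-space block of `U^(N)(u)`. -/
def Bop (N : ℕ) (u : ℂ) : Matrix (Conf N) (Conf N) ℂ :=
  Matrix.of fun s t => Umono N u (true, s) (false, t)
/-- `𝒞^(N)(u)`: the `(v₋, v₊)` auxiliary-space block of `U^(N)(u)`. -/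
def Cop (N : ℕ) (u : ℂ) : Matrix (Conf N) (Conf N) ℂ :=
  Matrix.of fun s t => Umono N u (false, s) (true, t)
/-- `𝒟^(N)(u)`: the `(v₋, v₋)` auxiliary-space block of `U^(N)(u)`. -/
def Dop (N : ℕ) (u : ℂ) : Matrix (Conf N) (Conf N) ℂ :=
  Matrix.of fun s t => Umono N u (false, s) (false, t)

/-- The transfer matrix
`t^(N)(u) = (sinh u / sinh η) 𝒜^(N)(u) - (sinh(u+2η)/sinh η) 𝒟^(N)(u)`. -/
def tOp (N : ℕ) (u : ℂ) : Matrix (Conf N) (Conf N) ℂ :=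
  (Complex.sinh u / Complex.sinh ηc) • Aop N u
    - (Complex.sinh (u + 2 * ηc) / Complex.sinh ηc) • Dop N u

/-- The pseudovacuum `Ω^(N) = v₊ ⊗ ⋯ ⊗ v₊`. -/
def Omega (N : ℕ) : Conf N → ℂ := fun s => if ∀ j, s j = true then 1 else 0

/-- `E^ε ⊗ X : V^⊗(n+2) → V^⊗(n+1)`: the linear functional `E^ε : V → ℂ`, `v_ε ↦ 1`
(zero on the other basis vector), applied to the leftmost site `N = n+2`, tensored with
the operator `X` on the remaining sites `n+1,…,1`.  Here `e = true` encodes `ε = +`. -/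
def Etens (n : ℕ) (e : Bool) (X : Matrix (Conf (n + 1)) (Conf (n + 1)) ℂ) :
    Matrix (Conf (n + 1)) (Conf (n + 2)) ℂ :=
  Matrix.of fun o i =>
    (if i (Fin.last (n + 1)) = e then 1 else 0) * X o (fun j => i (Fin.castSucc j))

/-- `F ⊗ X` : the one-site operator `F` applied to the leftmost site `N+1` of a chain of
`N+1` sites, tensored with the operator `X` on the remaining sites `N,…,1`. -/
def siteTens (N : ℕ) (F : Matrix Bool Bool ℂ) (X : Matrix (Conf N) (Conf N) ℂ) :
    Matrix (Conf (N + 1)) (Conf (N + 1)) ℂ :=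
  Matrix.of fun o i =>
    F (o (Fin.last N)) (i (Fin.last N)) * X (fun j => o (Fin.castSucc j)) (fun j => i (Fin.castSucc j))

/-- `E^ε_{ε'} : V → V` sends `v_ε ↦ v_{ε'}` and the other basis vector to `0`
(`true` encodes `+`). -/
def Eop (e e' : Bool) : Matrix Bool Bool ℂ :=
  Matrix.of fun o i => if i = e ∧ o = e' then 1 else 0
/-! The Lax matrices `L x z`, the entries of `R` in a quantum space with values in the auxiliary
space, satisfy one local exchange relation (`lax_exchange`): merging two spins `v₊ v₊` into `v₋`
on a row of two `L`s gives `d` times one `L`, up to two terms in which the Lax matrix `L ₊ ₋` is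
split off on either side. Adding a site to the chain replaces an auxiliary block `X` of the
double-row monodromy by `∑ z, L x z * X * L z y`, so using the relation once on either row gives
`Q U = d² U Q - (-1)^N W(U)`, where the defect `W` is linear in `U`; the alternating signs of
`Q` make the defects of neighbouring mergers cancel except at the last site, and `K⁻` has no
defect. The block `(v₊, v₋)` of `W` vanishes, which is the ℬ-relation. -/

namespace OpenChain

-- Indices increase to the right, so the spin on the right of `▹` sits on the leftmost site.
local infixl:75 " ▹ " => Fin.snoc (α := fun _ => _)

section Lax

variable {R : Type*} [CommRing R] {a b d : R}

/-- The six-vertex Lax matrix: the entry from `z` to `x` of the R-matrix with weights `a`, `b` and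
`c = 1` in a quantum space, as an operator on the auxiliary space. -/
def lax (a b : R) : Bool → Bool → Matrix Bool Bool R
  | true, true => diagonal fun e => if e then a else b
  | false, false => diagonal fun e => if e then b else a
  | true, false => single false true 1
  | false, true => single true false 1

theorem lax_exchange (hsum : a + b + d = 0) (hquad : a ^ 2 + a * b + b ^ 2 = 1) (x z w : Bool) :
    (if x = false then lax a b true z * lax a b true w else 0) =
      (if z = true ∧ w = true then d • lax a b x false else 0) +
      (if w = true then lax a b x z * lax a b true false else 0) +
      (if z = true then lax a b true false * lax a b x w else 0) := by
  ext i j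
  cases x <;> cases z <;> cases w <;> cases i <;> cases j <;>
    simp [lax, Matrix.mul_apply, single_apply, diagonal_apply] <;> grind

/-- The effect on an auxiliary block of the double-row monodromy of adding a site whose spin goes
from `y` to `x`. -/
def dress (a b : R) (x y : Bool) : Module.End R (Matrix Bool Bool R) :=
  ∑ z, LinearMap.mulLeftRight R (lax a b x z, lax a b z y)

theorem dress_apply (x y : Bool) (X : Matrix Bool Bool R) :
    dress a b x y X = ∑ z, lax a b x z * X * lax a b z y := by
  simp [dress]

/-- The failure of an auxiliary block `X` of the monodromy to commute with the supercharge, up to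
the factor `d²`; `y` is the spin of the site that the supercharge removes. -/
def defect (a b d : R) (y : Bool) : Module.End R (Matrix Bool Bool R) :=
  LinearMap.mulLeftRight R (lax a b true false, lax a b true y) +
    if y = true then d • LinearMap.mulRight R (lax a b true false) else 0

theorem defect_apply (y : Bool) (X : Matrix Bool Bool R) :
    defect a b d y X = lax a b true false * X * lax a b true y +
      if y = true then d • (X * lax a b true false) else 0 := by
  cases y <;> simp [defect]

theorem defect_apply_true_false (y : Bool) (X : Matrix Bool Bool R) :
    defect a b d y X true false = 0 := by
  cases y <;> simp [defect_apply, lax]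

theorem defect_boundary (y : Bool) :
    defect a b d y (diagonal fun e => if e then d else -a) = 0 := by
  ext i j
  cases y <;> cases i <;> cases j <;> simp [defect_apply, lax]

theorem dress_dress_exchange_left (hsum : a + b + d = 0) (hquad : a ^ 2 + a * b + b ^ 2 = 1)
    (x y w : Bool) (X : Matrix Bool Bool R) :
    (if x = false then dress a b true y (dress a b true w X) else 0) =
      d • (lax a b x false * X * (lax a b true w * lax a b true y)) +
      dress a b x y (lax a b true false * X * lax a b true w) +
      lax a b true false * dress a b x w X * lax a b true y :=
  calc
    _ = ∑ z, ∑ v, (if x = false then lax a b true z * lax a b true v else 0) * X *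
        (lax a b v w * lax a b z y) := by
      split_ifs <;> simp [dress_apply, mul_add, add_mul, mul_assoc]
    _ = _ := by
      simp [lax_exchange hsum hquad, dress_apply, add_mul, ite_and, Finset.sum_add_distrib,
        Finset.mul_sum, Finset.sum_mul, mul_assoc, -Fintype.univ_bool]

theorem mul_lax_mul_lax_exchange_right (hsum : a + b + d = 0)
    (hquad : a ^ 2 + a * b + b ^ 2 = 1) (x y w : Bool) (X : Matrix Bool Bool R) :
    lax a b x false * X * (lax a b true w * lax a b true y) =
      (if w = true ∧ y = true then d • dress a b x false X else 0) +
      (if y = true then dress a b x w X * lax a b true false else 0) +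
      if w = true then dress a b x y (X * lax a b true false) else 0 :=
  calc
    _ = ∑ z, lax a b x z * X * (if z = false then lax a b true w * lax a b true y else 0) := by
      simp
    _ = _ := by
      simp only [lax_exchange hsum hquad, dress_apply]
      split_ifs <;> simp [mul_add, mul_assoc, Finset.sum_add_distrib, Finset.smul_sum,
        Finset.sum_mul, -Fintype.univ_bool]

theorem dress_exchange (hsum : a + b + d = 0) (hquad : a ^ 2 + a * b + b ^ 2 = 1)
    (x y w : Bool) (X : Matrix Bool Bool R) :
    (if x = false then dress a b true y (dress a b true w X) else 0) =
      (if y = true ∧ w = true then d ^ 2 • dress a b x false X else 0) +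
      dress a b x y (defect a b d w X) + defect a b d y (dress a b x w X) := by
  rw [dress_dress_exchange_left hsum hquad, mul_lax_mul_lax_exchange_right hsum hquad]
  simp only [defect_apply, and_comm (a := w = true), ite_and, map_add, apply_ite (dress a b x y),
    map_smul, map_zero]
  split_ifs <;> module

end Lax

section Tuple

variable {α : Type*} {N : ℕ}

theorem sum_tuple_succ [Fintype α] {M : Type*} [AddCommMonoid M] (F : (Fin (N + 1) → α) → M) :
    ∑ r, F r = ∑ s : Fin N → α, ∑ x, F (s ▹ x) := by
  rw [← (Fin.snocEquiv fun _ => α).sum_comp, Fintype.sum_prod_type_right]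
  rfl

theorem snoc_agree_off_castSucc (i : Fin N) (s t : Fin N → α) (x y : α) :
    (∀ j, j ≠ i.castSucc → (s ▹ x) j = (t ▹ y) j) ↔ x = y ∧ ∀ j, j ≠ i → s j = t j := by
  rw [Fin.forall_fin_succ']
  simp [(Fin.castSucc_ne_last _).symm, and_comm]

theorem snoc_agree_off_last (s t : Fin N → α) (x y : α) :
    (∀ j, j ≠ Fin.last N → (s ▹ x) j = (t ▹ y) j) ↔ s = t := by
  rw [Fin.forall_fin_succ', funext_iff]
  simp [Fin.castSucc_ne_last]

end Tuple

section Monodromy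

variable {N : ℕ} (u : ℂ)

theorem Rm_apply (x y e f : Bool) : Rm u (e, x) (f, y) = lax (aF u) (bF u) x y e f := by
  cases x <;> cases y <;> cases e <;> cases f <;> simp [Rm, lax, cF]

theorem Rm_swap (x y e f : Bool) : Rm u (x, e) (y, f) = Rm u (e, x) (f, y) := by
  cases x <;> cases y <;> cases e <;> cases f <;> simp [Rm]

theorem Ri0_eq_R0i (i : Fin N) : Ri0 N u i = R0i N u i := by
  ext
  simp only [Ri0, R0i, Matrix.of_apply, Rm_swap]

/-- An operator on `V₀ ⊗ V^⊗N` as a matrix over the chain whose entries are operators on `V₀`. -/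
def auxBlocks (N : ℕ) : Matrix (Bool × Conf N) (Bool × Conf N) ℂ ≃+*
    Matrix (Conf N) (Conf N) (Matrix Bool Bool ℂ) :=
  (reindexRingEquiv ℂ (Equiv.prodComm _ _)).trans (compRingEquiv _ _ ℂ).symm

theorem auxBlocks_apply (M : Matrix (Bool × Conf N) (Bool × Conf N) ℂ) (s t : Conf N)
    (e f : Bool) : auxBlocks N M s t e f = M (e, s) (f, t) :=
  rfl

/-- Tensoring an operator on the chain with the identity on a new leftmost site. -/
def addSite {A : Type*} [NonAssocSemiring A] (N : ℕ) :
    Matrix (Conf N) (Conf N) A →+* Matrix (Conf (N + 1)) (Conf (N + 1)) A :=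
  ((reindexRingEquiv A ((Equiv.prodComm _ _).trans (Fin.snocEquiv fun _ => Bool))).toRingHom.comp
    (blockDiagonalRingHom _ _ A)).comp (Pi.constRingHom _ _)

theorem addSite_snoc {A : Type*} [NonAssocSemiring A] (M : Matrix (Conf N) (Conf N) A)
    (s t : Conf N) (x y : Bool) :
    addSite N M (s ▹ x) (t ▹ y) = if x = y then M s t else 0 := by
  simp only [addSite, Fin.snocEquiv]
  exact (blockDiagonal_apply ..).trans (by simp)

/-- The auxiliary blocks of the R-matrix acting on the auxiliary space and the site of index `i`. -/
def siteLax (N : ℕ) (u : ℂ) (i : Fin N) : Matrix (Conf N) (Conf N) (Matrix Bool Bool ℂ) :=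
  Matrix.of fun s t => if ∀ j, j ≠ i → s j = t j then lax (aF u) (bF u) (s i) (t i) else 0

theorem auxBlocks_R0i (i : Fin N) : auxBlocks N (R0i N u i) = siteLax N u i := by
  ext s t e f
  rw [auxBlocks_apply, R0i, siteLax, Matrix.of_apply, Matrix.of_apply, Rm_apply]
  split_ifs <;> rfl

theorem siteLax_castSucc (i : Fin N) :
    siteLax (N + 1) u i.castSucc = addSite N (siteLax N u i) := by
  ext s t : 2
  cases s using Fin.snocCases with | _ s x
  cases t using Fin.snocCases with | _ t y
  simp only [addSite_snoc, siteLax, Matrix.of_apply, snoc_agree_off_castSucc, Fin.snoc_castSucc,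
    ite_and]

theorem siteLax_last_snoc (s t : Conf N) (x y : Bool) :
    siteLax (N + 1) u (Fin.last N) (s ▹ x) (t ▹ y) =
      if s = t then lax (aF u) (bF u) x y else 0 := by
  simp only [siteLax, Matrix.of_apply, snoc_agree_off_last, Fin.snoc_last]

theorem auxBlocks_K0m :
    auxBlocks N (K0m N u) = diagonal fun _ => diagonal fun e => if e then dF u else -aF u := by
  ext s t e f
  rw [auxBlocks_apply, K0m, Matrix.of_apply]
  by_cases h : s = t <;> simp [h, Km, diagonal_apply]

theorem auxBlocks_K0m_succ : auxBlocks (N + 1) (K0m (N + 1) u) =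
    addSite N (auxBlocks N (K0m N u)) := by
  ext s t : 2
  cases s using Fin.snocCases with | _ s x
  cases t using Fin.snocCases with | _ t y
  simp [addSite_snoc, auxBlocks_K0m, diagonal_apply, Fin.snoc_inj, ite_and, and_comm]

theorem auxBlocks_Tmono : auxBlocks N (Tmono N u) = (List.ofFn (siteLax N u)).prod := by
  simp only [Tmono, map_list_prod, List.map_ofFn, Function.comp_def, auxBlocks_R0i]

theorem auxBlocks_Tbar : auxBlocks N (Tbar N u) = (List.ofFn (siteLax N u)).reverse.prod := by
  simp only [Tbar, map_list_prod, List.map_reverse, List.map_ofFn, Function.comp_def, Ri0_eq_R0i,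
    auxBlocks_R0i]

theorem auxBlocks_Tmono_succ : auxBlocks (N + 1) (Tmono (N + 1) u) =
    addSite N (auxBlocks N (Tmono N u)) * siteLax (N + 1) u (Fin.last N) := by
  simp only [auxBlocks_Tmono, List.ofFn_succ', List.prod_concat, siteLax_castSucc, map_list_prod,
    List.map_ofFn, Function.comp_def]

theorem auxBlocks_Tbar_succ : auxBlocks (N + 1) (Tbar (N + 1) u) =
    siteLax (N + 1) u (Fin.last N) * addSite N (auxBlocks N (Tbar N u)) := by
  simp only [auxBlocks_Tbar, List.ofFn_succ', List.concat_eq_append,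
    List.reverse_append, List.prod_append, List.reverse_singleton, List.prod_singleton,
    siteLax_castSucc, map_list_prod, List.map_reverse, List.map_ofFn, Function.comp_def]

theorem auxBlocks_Umono_zero (s t : Conf 0) :
    auxBlocks 0 (Umono 0 u) s t = diagonal fun e => if e then dF u else -aF u := by
  have hU : Umono 0 u = K0m 0 u := by simp [Umono, Tbar, Tmono]
  rw [hU, auxBlocks_K0m, Subsingleton.elim s t, diagonal_apply_eq]

theorem auxBlocks_Umono_succ : auxBlocks (N + 1) (Umono (N + 1) u) =
    siteLax (N + 1) u (Fin.last N) * addSite N (auxBlocks N (Umono N u)) *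
      siteLax (N + 1) u (Fin.last N) := by
  simp only [Umono, map_mul, auxBlocks_Tbar_succ, auxBlocks_K0m_succ, auxBlocks_Tmono_succ,
    mul_assoc]

theorem auxBlocks_Umono_snoc (s t : Conf N) (x y : Bool) :
    auxBlocks (N + 1) (Umono (N + 1) u) (s ▹ x) (t ▹ y) =
      dress (aF u) (bF u) x y (auxBlocks N (Umono N u) s t) := by
  simp only [auxBlocks_Umono_succ, Matrix.mul_apply, sum_tuple_succ, siteLax_last_snoc,
    addSite_snoc, dress_apply]
  simp [ite_mul, mul_ite]

end Monodromy

section Supercharge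

/-- The supercharge `Q^(N+1)`; the convention `Q^(1) = 0` starts the induction on the length of
the chain. -/
def supercharge : (N : ℕ) → Matrix (Conf N) (Conf (N + 1)) ℂ
  | 0 => 0
  | n + 1 => Qop n

theorem qMerge_castSucc_snoc (n : ℕ) (k : Fin (n + 1)) (s : Conf (n + 1)) (t : Conf (n + 2))
    (x y : Bool) :
    qMerge (n + 1) k.castSucc (s ▹ x) (t ▹ y) = if x = y then qMerge n k s t else 0 := by
  simp only [qMerge, Matrix.of_apply, ← ite_and]
  refine if_congr ?_ rfl rfl
  rw [Fin.forall_fin_succ']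
  simp only [Fin.succ_castSucc, Fin.succ_last, Fin.snoc_castSucc, Fin.snoc_last,
    Fin.val_castSucc, Fin.val_last, k.is_lt, k.is_lt.not_gt]
  tauto

theorem qMerge_last_snoc (n : ℕ) (s t : Conf n) (x y y' : Bool) :
    qMerge n (Fin.last n) (s ▹ x) (t ▹ y' ▹ y) =
      if x = false ∧ y' = true ∧ y = true ∧ s = t then 1 else 0 := by
  simp only [qMerge, Matrix.of_apply]
  refine if_congr ?_ rfl rfl
  rw [Fin.forall_fin_succ', funext_iff]
  simp only [Fin.snoc_castSucc, Fin.snoc_last, Fin.succ_last, Fin.val_castSucc, Fin.val_last,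
    Fin.is_lt, (Fin.is_lt _).not_gt, lt_self_iff_false, true_imp_iff, false_imp_iff, and_true]
  tauto

theorem supercharge_succ_snoc (N : ℕ) (s t : Conf N) (x y y' : Bool) :
    supercharge (N + 1) (s ▹ x) (t ▹ y' ▹ y) =
      (if x = y then supercharge N s (t ▹ y') else 0) +
        (-1) ^ N * if x = false ∧ y' = true ∧ y = true ∧ s = t then 1 else 0 := by
  cases N with
  | zero => simp [supercharge, Qop, ← qMerge_last_snoc]
  | succ n =>
    simp only [supercharge, Qop, ← qMerge_last_snoc]
    rw [Fin.sum_univ_castSucc]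
    simp [Matrix.sum_apply, qMerge_castSucc_snoc]

variable {M : Type*} [AddCommMonoid M] [Module ℂ M] {N : ℕ}

theorem sum_supercharge_snoc_smul (s : Conf N) (x : Bool) (F : Conf (N + 2) → M) :
    ∑ r, supercharge (N + 1) (s ▹ x) r • F r = ∑ r, supercharge N s r • F (r ▹ x) +
      (-1 : ℂ) ^ N • if x = false then F (s ▹ true ▹ true) else 0 := by
  simp only [sum_tuple_succ, supercharge_succ_snoc, add_smul, Finset.sum_add_distrib, mul_smul,
    ite_and, ite_smul, zero_smul, one_smul]
  cases x <;> simp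

theorem sum_supercharge_smul_snoc (t : Conf N) (y y' : Bool) (F : Conf (N + 1) → M) :
    ∑ r, supercharge (N + 1) r (t ▹ y' ▹ y) • F r = ∑ r, supercharge N r (t ▹ y') • F (r ▹ y) +
      (-1 : ℂ) ^ N • if y' = true ∧ y = true then F (t ▹ false) else 0 := by
  simp only [sum_tuple_succ, supercharge_succ_snoc, add_smul, Finset.sum_add_distrib, mul_smul,
    ite_and, ite_smul, zero_smul, one_smul]
  cases y <;> cases y' <;> simp

end Supercharge

section Relations

variable (u : ℂ)

theorem cosh_ηc : cosh ηc = -1 / 2 := by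
  have hη : ηc = ((Real.pi - Real.pi / 3 : ℝ) : ℂ) * I := by
    simp only [ηc]
    push_cast
    ring
  rw [hη, cosh_mul_I, ← ofReal_cos, Real.cos_pi_sub, Real.cos_pi_div_three]
  norm_num

theorem sinh_ηc_sq : sinh ηc ^ 2 = -3 / 4 := by
  linear_combination (cosh ηc - 1 / 2) * cosh_ηc - cosh_sq ηc

theorem sinh_ηc_ne_zero : sinh ηc ≠ 0 := by
  intro h
  have hsq := sinh_ηc_sq
  norm_num [h] at hsq

theorem aF_add_bF_add_dF : aF u + bF u + dF u = 0 := by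
  simp only [aF, bF, dF, sinh_add, sinh_sub, cosh_ηc]
  ring

theorem aF_sq_add_aF_mul_bF_add_bF_sq : aF u ^ 2 + aF u * bF u + bF u ^ 2 = 1 := by
  simp only [aF, bF, sinh_add, cosh_ηc]
  field_simp [sinh_ηc_ne_zero]
  linear_combination 4 * sinh ηc ^ 2 * cosh_sq u + 4 * sinh u ^ 2 * sinh_ηc_sq

theorem supercharge_Umono_snoc (N : ℕ) (s t : Conf N) (y : Bool) :
    ∑ r, supercharge N s r • auxBlocks (N + 1) (Umono (N + 1) u) r (t ▹ y) =
      dF u ^ 2 • ∑ r, supercharge N r (t ▹ y) • auxBlocks N (Umono N u) s r -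
        (-1 : ℂ) ^ N • defect (aF u) (bF u) (dF u) y (auxBlocks N (Umono N u) s t) := by
  induction N generalizing y with
  | zero => simp [supercharge, auxBlocks_Umono_zero, defect_boundary]
  | succ N ih =>
    cases s using Fin.snocCases with | _ s x
    cases t using Fin.snocCases with | _ t y'
    have dressed_ih : ∑ r, supercharge N s r •
        auxBlocks (N + 2) (Umono (N + 2) u) (r ▹ x) (t ▹ y' ▹ y) =
      dF u ^ 2 • ∑ r, supercharge N r (t ▹ y') •
        auxBlocks (N + 1) (Umono (N + 1) u) (s ▹ x) (r ▹ y) -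
      (-1 : ℂ) ^ N • dress (aF u) (bF u) x y
        (defect (aF u) (bF u) (dF u) y' (auxBlocks N (Umono N u) s t)) := by
      simp only [auxBlocks_Umono_snoc _ _ _ x y, ← map_smul, ← map_sum, ← map_sub, ih]
    rw [sum_supercharge_snoc_smul, sum_supercharge_smul_snoc, dressed_ih]
    simp only [auxBlocks_Umono_snoc, and_comm (a := y = true),
      dress_exchange (aF_add_bF_add_dF u) (aF_sq_add_aF_mul_bF_add_bF_sq u)]
    split_ifs <;> module

end Relations

end OpenChain

/-- Theorem 1, ℬ-relation: for every `N = n+2 ≥ 2` and every `u ∈ ℂ`,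
`Q^(N) ∘ ℬ^(N)(u) = d(u)² ℬ^(N-1)(u) ∘ Q^(N)` (`Qop n = Q^(n+2)`). -/
theorem QB_commutation (n : ℕ) (u : ℂ) :
    Qop n * Bop (n + 2) u = dF u ^ 2 • (Bop (n + 1) u * Qop n) := by
  ext s t
  cases t using Fin.snocCases with | _ t y
  have hU := congrFun₂ (OpenChain.supercharge_Umono_snoc u (n + 1) s t y) true false
  simpa [OpenChain.supercharge, OpenChain.auxBlocks_apply, OpenChain.defect_apply_true_false,
    Matrix.mul_apply, Matrix.sum_apply, Bop, mul_comm] using hU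
end
end

section
/- (Theorem 1, 𝒟-relation) For every N ≥ 2 and every u ∈ ℂ: Q^(N) ∘ 𝒟^(N)(u) − d(u)² · 𝒟^(N−1)(u) ∘ Q^(N) = (−1)^N b(u) c(u) · (E⁺ ⊗ ℬ^(N−1)(u)) as linear maps V^⊗N → V^⊗(N−1). -/
noncomputable section
open Complex Matrix

/-!
Cutting `U^(N+1)` along the leftmost site gives a `2 × 2` matrix over the auxiliary space, and this
matrix is obtained from that of `U^(N)` by a linear dressing map built from two `R`-matrices. The
supercharge satisfies a similar one-site recursion: `Q^(N+1)` is `1 ⊗ Q^(N)` plus the term merging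
the two leftmost sites. The defect `Q^(N+1) U^(N+1) - d² U^(N) Q^(N+1)` is therefore dressed at
every step, up to a local correction that depends on at most two sites. It stays equal to an
explicit boundary term because that term satisfies a local `2 × 2` identity. The combinatorial
point enters only through `d = -(a + b)` and `a² + a b + b² = 1`.
-/

section Weights

lemma cosh_ηc : cosh ηc = -1 / 2 := by
  have angle : ηc = ((Real.pi - Real.pi / 3 : ℝ) : ℂ) * I := by
    unfold ηc
    push_cast
    ring
  rw [angle, cosh_mul_I, ← ofReal_cos, Real.cos_pi_sub, Real.cos_pi_div_three]
  norm_num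

lemma sinh_ηc_sq : sinh ηc ^ 2 = -3 / 4 := by
  rw [sinh_sq, cosh_ηc]
  norm_num

lemma sinh_ηc_ne_zero : sinh ηc ≠ 0 := by
  intro h
  have := sinh_ηc_sq
  norm_num [h] at this

lemma bF_sq (u : ℂ) : bF u ^ 2 = -(4 / 3) * sinh u ^ 2 := by
  rw [bF, div_pow, sinh_ηc_sq]
  ring

lemma aF_eq (u : ℂ) : aF u = cosh u - bF u / 2 := by
  unfold aF bF
  rw [sinh_add, cosh_ηc]
  field_simp [sinh_ηc_ne_zero]
  ring

lemma dF_eq (u : ℂ) : dF u = -(aF u + bF u) := by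
  unfold dF aF bF
  rw [sinh_add, sinh_sub, cosh_ηc]
  ring

lemma aF_sq_add_aF_mul_bF_add_bF_sq (u : ℂ) : aF u ^ 2 + aF u * bF u + bF u ^ 2 = 1 := by
  rw [aF_eq]
  linear_combination (3 / 4) * bF_sq u + cosh_sq u

end Weights

section LocalAlgebra

variable {R : Type*}

/-- The operator `[[p, q], [r, s]]` on the auxiliary space, in the ordered basis `(v₊, v₋)`. -/
def auxMatrix (p q r s : R) : Matrix Bool Bool R :=
  Matrix.of fun
    | true, true => p
    | true, false => q
    | false, true => r
    | false, false => s

lemma auxMatrix_eta (V : Matrix Bool Bool R) :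
    auxMatrix (V true true) (V true false) (V false true) (V false false) = V := by
  ext (_ | _) (_ | _) <;> rfl

lemma smul_auxMatrix [Mul R] (k p q r s : R) :
    k • auxMatrix p q r s = auxMatrix (k * p) (k * q) (k * r) (k * s) := by
  ext (_ | _) (_ | _) <;> rfl

lemma auxMatrix_add [Add R] (p q r s p' q' r' s' : R) :
    auxMatrix p q r s + auxMatrix p' q' r' s' =
      auxMatrix (p + p') (q + q') (r + r') (s + s') := by
  ext (_ | _) (_ | _) <;> rfl

lemma auxMatrix_sub [Sub R] (p q r s p' q' r' s' : R) :
    auxMatrix p q r s - auxMatrix p' q' r' s' =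
      auxMatrix (p - p') (q - q') (r - r') (s - s') := by
  ext (_ | _) (_ | _) <;> rfl

lemma auxMatrix_zero [Zero R] : auxMatrix (0 : R) 0 0 0 = 0 := by
  ext (_ | _) (_ | _) <;> rfl

variable [CommRing R]

/-- The Lax operator: the auxiliary-space matrix of an `R`-matrix with weights `a`, `b` and
`c = 1`, between the states `z` (in) and `x` (out) of the quantum site. -/
def lax (a b : R) (x z : Bool) : Matrix Bool Bool R :=
  if x = z then diagonal fun α => if α = x then a else b else single z x 1

/-- The dressing map: conjugating by the `R`-matrices of one new site takes an auxiliary-space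
matrix `V` to the matrix between the states `y` (in) and `x` (out) of that site. -/
def dress (a b : R) (x y : Bool) : Matrix Bool Bool R →ₗ[R] Matrix Bool Bool R :=
  ∑ z, LinearMap.mulLeftRight R (lax a b x z, lax a b z y)

lemma dress_apply (a b : R) (x y : Bool) (V : Matrix Bool Bool R) :
    dress a b x y V = ∑ z, lax a b x z * V * lax a b z y := by
  simp [dress]

lemma dress_true_true (a b p q r s : R) :
    dress a b true true (auxMatrix p q r s) =
      auxMatrix (a ^ 2 * p) (a * b * q) (a * b * r) (b ^ 2 * s + p) := by
  rw [dress_apply]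
  ext (_ | _) (_ | _) <;> simp [lax, auxMatrix, mul_apply] <;> ring

lemma dress_true_false (a b p q r s : R) :
    dress a b true false (auxMatrix p q r s) = auxMatrix (a * q) 0 (b * (p + s)) (a * q) := by
  rw [dress_apply]
  ext (_ | _) (_ | _) <;> simp [lax, auxMatrix, mul_apply, single_apply] <;> ring

lemma dress_false_true (a b p q r s : R) :
    dress a b false true (auxMatrix p q r s) = auxMatrix (a * r) (b * (p + s)) 0 (a * r) := by
  rw [dress_apply]
  ext (_ | _) (_ | _) <;> simp [lax, auxMatrix, mul_apply, single_apply] <;> ring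

lemma dress_false_false (a b p q r s : R) :
    dress a b false false (auxMatrix p q r s) =
      auxMatrix (b ^ 2 * p + s) (a * b * q) (a * b * r) (a ^ 2 * s) := by
  rw [dress_apply]
  ext (_ | _) (_ | _) <;> simp [lax, auxMatrix, mul_apply] <;> ring

/-- The auxiliary-space matrix, in terms of that of `U^(N)`, of the boundary term left over by
commuting the supercharge with `U^(N+1)` when the leftmost site is in state `y`. Its four entries
are the right-hand sides of the relations for `𝒜`, `ℬ`, `𝒞` and `𝒟`; `-(a + b)` stands for `d`. -/
def boundaryTerm (a b : R) (y : Bool) (V : Matrix Bool Bool R) : Matrix Bool Bool R :=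
  if y then
    auxMatrix (-(a + b) * V true false) 0
      (a * V true true + -(a + b) * V false false) (b * V true false)
  else auxMatrix 0 0 (V true false) 0

lemma boundaryTerm_true (a b p q r s : R) :
    boundaryTerm a b true (auxMatrix p q r s) =
      auxMatrix (-(a + b) * q) 0 (a * p + -(a + b) * s) (b * q) := rfl

lemma boundaryTerm_false (a b p q r s : R) :
    boundaryTerm a b false (auxMatrix p q r s) = auxMatrix 0 0 q 0 := rfl

lemma boundaryTerm_reflection (a b : R) (y : Bool) :
    boundaryTerm a b y (auxMatrix (-(a + b)) 0 0 (-a)) = 0 := by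
  cases y
  · rw [boundaryTerm_false, auxMatrix_zero]
  · rw [boundaryTerm_true, ← auxMatrix_zero]
    congr 1 <;> ring

theorem boundaryTerm_dress_add_dress_boundaryTerm {a b : R} (h : a ^ 2 + a * b + b ^ 2 = 1)
    (x y₁ y₂ : Bool) (V : Matrix Bool Bool R) :
    boundaryTerm a b y₂ (dress a b x y₁ V) + dress a b x y₂ (boundaryTerm a b y₁ V) =
      (if x = false then dress a b true y₂ (dress a b true y₁ V) else 0) -
        (-(a + b)) ^ 2 • if y₂ = true ∧ y₁ = true then dress a b x false V else 0 := by
  rw [← auxMatrix_eta V]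
  cases x <;> cases y₁ <;> cases y₂ <;>
    simp only [dress_true_true, dress_true_false, dress_false_true, dress_false_false,
      boundaryTerm_true, boundaryTerm_false, smul_auxMatrix, auxMatrix_add, auxMatrix_sub,
      ← auxMatrix_zero, if_true, if_false, reduceCtorEq, and_self, and_false, false_and] <;>
    congr 1 <;> grind

end LocalAlgebra

section Configurations

variable {N : ℕ}

/-- The configuration `s` extended by a new leftmost site in state `x`. -/
abbrev Conf.snoc (s : Conf N) (x : Bool) : Conf (N + 1) := Fin.snoc (α := fun _ => Bool) s x

lemma Conf.exists_eq_snoc (s : Conf (N + 1)) : ∃ (t : Conf N) (x : Bool), s = t.snoc x :=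
  ⟨Fin.init s, s (Fin.last N), (Fin.snoc_init_self s).symm⟩

lemma Conf.sum_eq_sum_snoc {M : Type*} [AddCommMonoid M] (f : Conf (N + 1) → M) :
    ∑ s, f s = ∑ s : Conf N, ∑ x, f (s.snoc x) := by
  rw [← (Fin.snocEquiv fun _ => Bool).sum_comp f, Fintype.sum_prod_type_right]
  rfl

lemma Conf.agree_off_castSucc_iff (i : Fin N) (s t : Conf N) (x y : Bool) :
    (∀ j, j ≠ i.castSucc → s.snoc x j = t.snoc y j) ↔ (∀ j, j ≠ i → s j = t j) ∧ x = y := by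
  simp [Fin.forall_fin_succ', Fin.castSucc_inj, (Fin.castSucc_ne_last i).symm]

lemma Conf.agree_off_last_iff (s t : Conf N) (x y : Bool) :
    (∀ j, j ≠ Fin.last N → s.snoc x j = t.snoc y j) ↔ s = t := by
  simp [Fin.forall_fin_succ', Fin.castSucc_ne_last, funext_iff]

end Configurations

section AuxiliarySpace

open scoped Kronecker

variable {R : Type*}

/-- The auxiliary-space matrix of `M` between the basis states `t` (in) and `s` (out). -/
def auxBlock {κ : Type*} (M : Matrix (Bool × κ) (Bool × κ) R) (s t : κ) : Matrix Bool Bool R :=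
  M.submatrix (·, s) (·, t)

lemma auxBlock_mul {κ : Type*} [Fintype κ] [NonUnitalNonAssocSemiring R]
    (A B : Matrix (Bool × κ) (Bool × κ) R) (s t : κ) :
    auxBlock (A * B) s t = ∑ r, auxBlock A s r * auxBlock B r t := by
  ext α β
  simp only [auxBlock, submatrix_apply, mul_apply, Matrix.sum_apply, Fintype.sum_prod_type_right]

variable {N : ℕ}

/-- The splitting of `V₀ ⊗ V^⊗(N+1)` into `V₀ ⊗ V^⊗N` and the leftmost site. -/
def splitLast (N : ℕ) : Bool × Conf (N + 1) ≃ (Bool × Conf N) × Bool where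
  toFun p := ((p.1, Fin.init p.2), p.2 (Fin.last N))
  invFun p := (p.1.1, p.1.2.snoc p.2)
  left_inv p := by simp
  right_inv p := by simp

variable [CommSemiring R]

/-- The extension of operators on `V₀ ⊗ V^⊗N` to `V₀ ⊗ V^⊗(N+1)` by the identity on the leftmost
site. -/
def liftSite :
    Matrix (Bool × Conf N) (Bool × Conf N) R →*
      Matrix (Bool × Conf (N + 1)) (Bool × Conf (N + 1)) R where
  toFun M := (M ⊗ₖ (1 : Matrix Bool Bool R)).submatrix (splitLast N) (splitLast N)
  map_one' := by rw [one_kronecker_one, submatrix_one_equiv]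
  map_mul' A B := by rw [submatrix_mul_equiv, ← mul_kronecker_mul, one_mul]

lemma liftSite_apply_snoc (M : Matrix (Bool × Conf N) (Bool × Conf N) R) (α β x y : Bool)
    (s t : Conf N) :
    liftSite M (α, s.snoc x) (β, t.snoc y) = if x = y then M (α, s) (β, t) else 0 := by
  simp [liftSite, splitLast, one_apply]

lemma auxBlock_liftSite (M : Matrix (Bool × Conf N) (Bool × Conf N) R) (s t : Conf N)
    (x y : Bool) :
    auxBlock (liftSite M) (s.snoc x) (t.snoc y) = if x = y then auxBlock M s t else 0 := by
  ext α β
  rw [auxBlock, submatrix_apply, liftSite_apply_snoc]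
  split_ifs <;> rfl

end AuxiliarySpace

section Chain

variable {N : ℕ}

lemma Rm_swap (u : ℂ) (p q : Bool × Bool) : Rm u p.swap q.swap = Rm u p q := by
  rcases p with ⟨_ | _, _ | _⟩ <;> rcases q with ⟨_ | _, _ | _⟩ <;> simp [Rm]

lemma Ri0_eq_R0i (N : ℕ) (u : ℂ) : Ri0 N u = R0i N u := by
  ext i p q
  simp only [Ri0, R0i, of_apply, ← Rm_swap u (p.1, p.2 i), Prod.swap_prod_mk]

lemma auxBlock_R0i_last (u : ℂ) (s t : Conf N) (x y : Bool) :
    auxBlock (R0i (N + 1) u (Fin.last N)) (s.snoc x) (t.snoc y) =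
      if s = t then lax (aF u) (bF u) x y else 0 := by
  ext α β
  simp only [auxBlock, R0i, submatrix_apply, of_apply, Conf.agree_off_last_iff, Fin.snoc_last]
  split_ifs
  · cases x <;> cases y <;> cases α <;> cases β <;> simp [Rm, lax, cF]
  · rfl

lemma liftSite_R0i (u : ℂ) (i : Fin N) : liftSite (R0i N u i) = R0i (N + 1) u i.castSucc := by
  ext ⟨α, s⟩ ⟨β, t⟩
  obtain ⟨s, x, rfl⟩ := s.exists_eq_snoc
  obtain ⟨t, y, rfl⟩ := t.exists_eq_snoc
  simp only [liftSite_apply_snoc, R0i, of_apply, Conf.agree_off_castSucc_iff, Fin.snoc_castSucc,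
    and_comm, ite_and]

lemma liftSite_K0m (N : ℕ) (u : ℂ) : liftSite (K0m N u) = K0m (N + 1) u := by
  ext ⟨α, s⟩ ⟨β, t⟩
  obtain ⟨s, x, rfl⟩ := s.exists_eq_snoc
  obtain ⟨t, y, rfl⟩ := t.exists_eq_snoc
  simp only [liftSite_apply_snoc, K0m, of_apply, Fin.snoc_inj, and_comm, ite_and]

lemma Tmono_succ (N : ℕ) (u : ℂ) :
    Tmono (N + 1) u = liftSite (Tmono N u) * R0i (N + 1) u (Fin.last N) := by
  simp only [Tmono, List.ofFn_succ_last, List.prod_append, List.prod_singleton, map_list_prod,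
    List.map_ofFn, Function.comp_def, liftSite_R0i]

lemma Tbar_succ (N : ℕ) (u : ℂ) :
    Tbar (N + 1) u = R0i (N + 1) u (Fin.last N) * liftSite (Tbar N u) := by
  simp only [Tbar, Ri0_eq_R0i, List.ofFn_succ_last, List.reverse_append, List.reverse_singleton,
    List.prod_append, List.prod_singleton, map_list_prod, List.map_reverse, List.map_ofFn,
    Function.comp_def, liftSite_R0i]

lemma Umono_succ (N : ℕ) (u : ℂ) :
    Umono (N + 1) u =
      R0i (N + 1) u (Fin.last N) * liftSite (Umono N u) * R0i (N + 1) u (Fin.last N) := by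
  simp only [Umono, Tmono_succ, Tbar_succ, ← liftSite_K0m, map_mul, mul_assoc]

theorem auxBlock_Umono_snoc (u : ℂ) (s t : Conf N) (x y : Bool) :
    auxBlock (Umono (N + 1) u) (s.snoc x) (t.snoc y) =
      dress (aF u) (bF u) x y (auxBlock (Umono N u) s t) := by
  simp only [Umono_succ, auxBlock_mul, Conf.sum_eq_sum_snoc, auxBlock_R0i_last, auxBlock_liftSite,
    dress_apply, ite_mul, mul_ite, zero_mul, mul_zero, Finset.sum_ite_irrel,
    Finset.sum_const_zero, Finset.sum_ite_eq, Finset.sum_ite_eq', Finset.mem_univ, if_true]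

lemma auxBlock_Umono_zero (u : ℂ) (s t : Conf 0) :
    auxBlock (Umono 0 u) s t = auxMatrix (-(aF u + bF u)) 0 0 (-aF u) := by
  obtain rfl := Subsingleton.elim s t
  ext (_ | _) (_ | _) <;> simp [auxBlock, auxMatrix, Umono, Tbar, Tmono, K0m, Km, dF_eq]

lemma qMerge_last (n : ℕ) (o : Conf n) (s : Conf (n + 1)) (x y : Bool) :
    qMerge n (Fin.last n) (o.snoc x) (s.snoc y) =
      if x = false ∧ y = true ∧ s = o.snoc true then 1 else 0 := by
  obtain ⟨s, z, rfl⟩ := s.exists_eq_snoc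
  simp only [qMerge, of_apply]
  congr 1
  simp only [Fin.forall_fin_succ', Fin.snoc_castSucc, Fin.snoc_last, Fin.succ_last,
    Fin.val_castSucc, Fin.val_last, Fin.is_lt, funext_iff]
  grind

lemma qMerge_castSucc (n : ℕ) (k : Fin (n + 1)) (o : Conf (n + 1)) (s : Conf (n + 2))
    (x y : Bool) :
    qMerge (n + 1) k.castSucc (o.snoc x) (s.snoc y) = if x = y then qMerge n k o s else 0 := by
  simp only [qMerge, of_apply]
  rw [← ite_and]
  congr 1
  simp only [Fin.forall_fin_succ' (n := n + 1), Fin.succ_castSucc, Fin.succ_last, Fin.snoc_castSucc,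
    Fin.snoc_last, Fin.val_castSucc, Fin.val_last, k.is_lt]
  grind

/-- The supercharge as an operator from `N + 1` to `N` sites, extended by `0` to the chain with a
single site, where `Qop` is not defined. -/
def susyCharge : (N : ℕ) → Matrix (Conf N) (Conf (N + 1)) ℂ
  | 0 => 0
  | n + 1 => Qop n

lemma susyCharge_snoc (N : ℕ) (o : Conf N) (s : Conf (N + 1)) (x y : Bool) :
    susyCharge (N + 1) (o.snoc x) (s.snoc y) =
      (if x = y then susyCharge N o s else 0) +
        if x = false ∧ y = true ∧ s = o.snoc true then (-1) ^ N else 0 := by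
  cases N with
  | zero => simp [susyCharge, Qop, ← qMerge_last]
  | succ n =>
    simp [susyCharge, Qop, Matrix.sum_apply, Fin.sum_univ_castSucc (n := n + 1), qMerge_castSucc,
      qMerge_last]

lemma sum_susyCharge_smul_auxBlock_snoc (u : ℂ) (o : Conf N) (i : Conf (N + 1)) (x y : Bool) :
    ∑ s, susyCharge (N + 1) (o.snoc x) s • auxBlock (Umono (N + 2) u) s (i.snoc y) =
      dress (aF u) (bF u) x y (∑ s, susyCharge N o s • auxBlock (Umono (N + 1) u) s i) +
        (-1 : ℂ) ^ N • if x = false then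
          dress (aF u) (bF u) true y (auxBlock (Umono (N + 1) u) (o.snoc true) i) else 0 := by
  simp only [Conf.sum_eq_sum_snoc (N := N + 1), susyCharge_snoc, auxBlock_Umono_snoc, add_smul,
    ite_smul, zero_smul, Finset.sum_add_distrib, map_sum, map_smul]
  simp [ite_and]

lemma sum_susyCharge_snoc_smul_auxBlock (u : ℂ) (o i : Conf N) (x y₁ y₂ : Bool) :
    ∑ t, susyCharge (N + 1) t ((i.snoc y₁).snoc y₂) • auxBlock (Umono (N + 1) u) (o.snoc x) t =
      dress (aF u) (bF u) x y₂
          (∑ t, susyCharge N t (i.snoc y₁) • auxBlock (Umono N u) o t) +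
        (-1 : ℂ) ^ N • if y₂ = true ∧ y₁ = true then
          dress (aF u) (bF u) x false (auxBlock (Umono N u) o i) else 0 := by
  simp only [Conf.sum_eq_sum_snoc, susyCharge_snoc, auxBlock_Umono_snoc, add_smul, ite_smul,
    zero_smul, Finset.sum_add_distrib, map_sum, map_smul]
  simp [ite_and]

/-- The auxiliary-space matrix of `Q U^(N+1)(u) - d(u)² U^(N)(u) Q` between the states `i` of
`N + 1` sites (in) and `o` of `N` sites (out), where `Q` is the supercharge. -/
def susyDefect (N : ℕ) (u : ℂ) (o : Conf N) (i : Conf (N + 1)) : Matrix Bool Bool ℂ :=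
  ∑ s, susyCharge N o s • auxBlock (Umono (N + 1) u) s i -
    dF u ^ 2 • ∑ t, susyCharge N t i • auxBlock (Umono N u) o t

lemma susyDefect_succ (u : ℂ) (o i : Conf N) (x y₁ y₂ : Bool) :
    susyDefect (N + 1) u (o.snoc x) ((i.snoc y₁).snoc y₂) =
      dress (aF u) (bF u) x y₂ (susyDefect N u o (i.snoc y₁)) +
        (-1 : ℂ) ^ N • ((if x = false then
            dress (aF u) (bF u) true y₂
              (dress (aF u) (bF u) true y₁ (auxBlock (Umono N u) o i)) else 0) -
          dF u ^ 2 • if y₂ = true ∧ y₁ = true then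
            dress (aF u) (bF u) x false (auxBlock (Umono N u) o i) else 0) := by
  rw [susyDefect, sum_susyCharge_smul_auxBlock_snoc, sum_susyCharge_snoc_smul_auxBlock, susyDefect,
    map_sub, map_smul, auxBlock_Umono_snoc]
  module

theorem susyDefect_eq_boundaryTerm (u : ℂ) (o i : Conf N) (y : Bool) :
    susyDefect N u o (i.snoc y) =
      (-1 : ℂ) ^ (N + 1) • boundaryTerm (aF u) (bF u) y (auxBlock (Umono N u) o i) := by
  induction N generalizing y with
  | zero =>
    rw [auxBlock_Umono_zero, boundaryTerm_reflection]
    simp [susyDefect, susyCharge]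
  | succ N ih =>
    obtain ⟨o, x, rfl⟩ := o.exists_eq_snoc
    obtain ⟨i, y₁, rfl⟩ := i.exists_eq_snoc
    rw [susyDefect_succ, dF_eq, ih, map_smul, auxBlock_Umono_snoc,
      ← boundaryTerm_dress_add_dress_boundaryTerm (aF_sq_add_aF_mul_bF_add_bF_sq u)]
    module

end Chain

/-- Theorem 1, 𝒟-relation: for every `N = n+2 ≥ 2` and every `u ∈ ℂ`,
`Q^(N) ∘ 𝒟^(N)(u) - d(u)² 𝒟^(N-1)(u) ∘ Q^(N) = (-1)^N b(u) c(u) (E⁺ ⊗ ℬ^(N-1)(u))`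
(`Qop n = Q^(n+2)`). -/
theorem QD_commutation (n : ℕ) (u : ℂ) :
    Qop n * Dop (n + 2) u - dF u ^ 2 • (Dop (n + 1) u * Qop n)
      = ((-1 : ℂ) ^ (n + 2) * (bF u * cF u)) • Etens n true (Bop (n + 1) u) := by
  ext o i
  obtain ⟨i, y, rfl⟩ := i.exists_eq_snoc
  calc
    _ = susyDefect (n + 1) u o (i.snoc y) false false := by
      simp only [susyDefect, susyCharge, auxBlock, Dop, Matrix.sub_apply, Matrix.smul_apply,
        Matrix.sum_apply, mul_apply, submatrix_apply, of_apply, smul_eq_mul, mul_comm]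
    _ = _ := by
      rw [susyDefect_eq_boundaryTerm]
      cases y <;> simp [boundaryTerm, auxMatrix, auxBlock, Etens, Bop, cF, mul_assoc]
end
end
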